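/- Let K be a field, s ∈ ℤ^n, and let P ∈ K[x]^{n×n} be in s-reduced form. Then det(P) is nonzero and its leading coefficient equals det(lm_s(P)). In particular, if P is in s-weak Popov form, then the leading coefficient of det(P) equals the product of the leading coefficients of the diagonal entries of P. -/

import Mathlib

open Polynomial Matrix

/-- The degree of a polynomial, viewed in `ℤ ∪ {-∞}`. -/
noncomputable def degZ {K : Type*} [Field K] (p : K[X]) : WithBot ℤ :=
  p.degree.map fun a : ℕ => (a : ℤ)

/-- The `s`-row degree of a (row) vector of polynomials. -/
noncomputable def rdegRow {K : Type*} [Field K] {ν : Type*} [Fintype ν]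
    (s : ν → ℤ) (v : ν → K[X]) : WithBot ℤ :=
  Finset.univ.sup fun j => degZ (v j) + (s j : WithBot ℤ)

/-- The `s`-row degree of a polynomial matrix. -/
noncomputable def rdeg {K : Type*} [Field K] {ι ν : Type*} [Fintype ν]
    (s : ν → ℤ) (P : Matrix ι ν K[X]) : ι → WithBot ℤ :=
  fun i => rdegRow s (P i)

/-- The `t`-column degree of a polynomial matrix. -/
noncomputable def cdeg {K : Type*} [Field K] {ι ν : Type*} [Fintype ι]
    (t : ι → ℤ) (P : Matrix ι ν K[X]) : ν → WithBot ℤ :=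
  fun j => Finset.univ.sup fun i => degZ (P i j) + (t i : WithBot ℤ)

/-- Coefficient of integer degree `d` of a polynomial (0 if `d < 0`). -/
noncomputable def coeffZ {K : Type*} [Field K] (p : K[X]) (d : ℤ) : K :=
  if 0 ≤ d then p.coeff d.toNat else 0

/-- The `s`-leading matrix of a polynomial matrix. -/
noncomputable def lm {K : Type*} [Field K] {ι ν : Type*} [Fintype ν]
    (s : ν → ℤ) (P : Matrix ι ν K[X]) : Matrix ι ν K :=
  Matrix.of fun i j =>
    (rdeg s P i).recBotCoe 0 fun t => coeffZ (P i j) (t - s j)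

/-- `P` is in `s`-reduced form: its `s`-leading matrix has full row rank,
i.e. its rows are linearly independent over `K`. -/
def IsReducedForm {K : Type*} [Field K] {ι ν : Type*} [Fintype ν]
    (s : ν → ℤ) (P : Matrix ι ν K[X]) : Prop :=
  LinearIndependent K fun i => lm s P i

open Classical in
/-- The `s`-pivot index of a row vector: the largest column index where the
`s`-row degree is attained (with a nonzero entry); `⊥` for the zero row. -/
noncomputable def piv {K : Type*} [Field K] {ν : Type*} [Fintype ν] [LinearOrder ν]
    (s : ν → ℤ) (v : ν → K[X]) : WithBot ν :=
  (Finset.univ.filter fun j => v j ≠ 0 ∧ degZ (v j) + (s j : WithBot ℤ) = rdegRow s v).max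

/-- The `s`-pivot degree of a row vector (junk value `0` for the zero row). -/
noncomputable def pivDeg {K : Type*} [Field K] {ν : Type*} [Fintype ν] [LinearOrder ν]
    (s : ν → ℤ) (v : ν → K[X]) : ℕ :=
  ((piv s v).map fun j => (v j).natDegree).unbotD 0

/-- `P` is in `s`-weak Popov form: no zero row and strictly increasing `s`-pivot indices. -/
def IsWeakPopov {K : Type*} [Field K] {ι ν : Type*} [Fintype ν] [LinearOrder ν] [Preorder ι]
    (s : ν → ℤ) (P : Matrix ι ν K[X]) : Prop :=
  (∀ i, piv s (P i) ≠ ⊥) ∧ StrictMono fun i => piv s (P i)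

/-- `P` is in `s`-unordered weak Popov form: no zero row and pairwise distinct
`s`-pivot indices. -/
def IsUWeakPopov {K : Type*} [Field K] {ι ν : Type*} [Fintype ν] [LinearOrder ν]
    (s : ν → ℤ) (P : Matrix ι ν K[X]) : Prop :=
  (∀ i, piv s (P i) ≠ ⊥) ∧ Function.Injective fun i => piv s (P i)

/-- `P` is in `s`-Popov form: `s`-weak Popov, monic pivots, and each pivot entry
has degree strictly larger than the other entries of its column. -/
def IsPopov {K : Type*} [Field K] {ι ν : Type*} [Fintype ν] [LinearOrder ν] [Preorder ι]
    (s : ν → ℤ) (P : Matrix ι ν K[X]) : Prop :=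
  IsWeakPopov s P ∧
    ∀ i (j : ν), piv s (P i) = (j : WithBot ν) →
      (P i j).Monic ∧ ∀ i', i' ≠ i → (P i' j).degree < (P i j).degree

/-- The row space of a polynomial matrix. -/
noncomputable def rowSpace {K : Type*} [Field K] {ι ν : Type*} (P : Matrix ι ν K[X]) :
    Submodule K[X] (ν → K[X]) :=
  Submodule.span K[X] (Set.range fun i => P i)

/-- The rows of `B` form a basis of the module `M`. -/
def IsBasisOf {K : Type*} [Field K] {ι ν : Type*} (B : Matrix ι ν K[X])
    (M : Submodule K[X] (ν → K[X])) : Prop :=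
  LinearIndependent K[X] (fun i => B i) ∧
    Submodule.span K[X] (Set.range fun i => B i) = M

/-- The left kernel of a polynomial matrix. -/
noncomputable def leftKernel {K : Type*} [Field K] {ι ν : Type*} [Fintype ι]
    (F : Matrix ι ν K[X]) : Submodule K[X] (ι → K[X]) :=
  LinearMap.ker F.vecMulLinear

/-!
Write `t i` for the `s`-degree of row `i`, so that `P i j` has degree at most `t i - s j`. In the
Leibniz expansion of `det P`, the bounds along any permutation add up to the same integer
`∑ t - ∑ s`, so collecting the coefficients of that degree gives the Leibniz expansion of
`det (lm s P)`. When `P` is reduced this determinant is nonzero, and is then the leading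
coefficient of `det P`.

The `s`-pivot of a row is its rightmost column with a nonzero entry of `lm s P`. Strictly
increasing pivots in a square matrix lie on the diagonal, so in weak Popov form `lm s P` is lower
triangular and its diagonal consists of the leading coefficients of the diagonal entries of `P`.
-/

section Degree

variable {K : Type*} [Field K] {p q : K[X]} {d e : ℤ}

theorem degZ_eq_bot_iff : degZ p = ⊥ ↔ p = 0 := by
  rw [degZ, WithBot.map_eq_bot_iff, degree_eq_bot]

theorem degZ_zero : degZ (0 : K[X]) = ⊥ :=
  degZ_eq_bot_iff.2 rfl

theorem degZ_of_ne_zero (hp : p ≠ 0) : degZ p = ((p.natDegree : ℤ) : WithBot ℤ) := by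
  rw [degZ, degree_eq_natDegree hp]
  rfl

theorem ne_zero_of_degZ_eq_coe (h : degZ p = d) : p ≠ 0 := by
  rintro rfl
  simp [degZ_zero] at h

theorem degZ_eq_sub_iff :
    degZ p = (d - e : ℤ) ↔ p ≠ 0 ∧ degZ p + (e : WithBot ℤ) = d := by
  rcases eq_or_ne p 0 with rfl | hp
  · simp [degZ_zero]
  · rw [degZ_of_ne_zero hp, ← WithBot.coe_add, WithBot.coe_inj, WithBot.coe_inj]
    simp [hp, eq_sub_iff_add_eq]

theorem degZ_mul (p q : K[X]) : degZ (p * q) = degZ p + degZ q := by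
  rw [degZ, degree_mul]
  exact map_add (Nat.castAddMonoidHom ℤ).withBotMap p.degree q.degree

theorem degZ_prod {ι : Type*} (S : Finset ι) (f : ι → K[X]) :
    degZ (∏ i ∈ S, f i) = ∑ i ∈ S, degZ (f i) := by
  rw [degZ, degree_prod]
  exact map_sum (Nat.castAddMonoidHom ℤ).withBotMap (fun i => (f i).degree) S

theorem coeffZ_natCast (p : K[X]) (m : ℕ) : coeffZ p m = p.coeff m := by
  simp [coeffZ]

theorem coeffZ_smul {R : Type*} [SMulZeroClass R K] (r : R) (p : K[X]) (d : ℤ) :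
    coeffZ (r • p) d = r • coeffZ p d := by
  unfold coeffZ
  split_ifs <;> simp

theorem coeffZ_sum {ι : Type*} (S : Finset ι) (f : ι → K[X]) (d : ℤ) :
    coeffZ (∑ i ∈ S, f i) d = ∑ i ∈ S, coeffZ (f i) d := by
  unfold coeffZ
  split_ifs <;> simp

theorem coeffZ_eq_leadingCoeff (h : degZ p = d) : coeffZ p d = p.leadingCoeff := by
  rw [degZ_of_ne_zero (ne_zero_of_degZ_eq_coe h), WithBot.coe_inj] at h
  rw [← h, coeffZ_natCast, leadingCoeff]

theorem coeffZ_eq_zero_of_degZ_lt (h : degZ p < d) : coeffZ p d = 0 := by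
  rcases eq_or_ne p 0 with rfl | hp
  · simp [coeffZ]
  · rw [degZ_of_ne_zero hp, WithBot.coe_lt_coe] at h
    lift d to ℕ using by omega
    rw [coeffZ_natCast]
    exact coeff_eq_zero_of_natDegree_lt (by exact_mod_cast h)

theorem coeffZ_ne_zero_iff (h : degZ p ≤ d) : coeffZ p d ≠ 0 ↔ degZ p = d := by
  refine ⟨fun hc => ?_, fun hd => ?_⟩
  · exact h.eq_of_not_lt fun hlt => hc (coeffZ_eq_zero_of_degZ_lt hlt)
  · rw [coeffZ_eq_leadingCoeff hd]
    exact leadingCoeff_ne_zero.2 (ne_zero_of_degZ_eq_coe hd)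

theorem degZ_le_iff_coeffZ_zero : degZ p ≤ d ↔ ∀ m : ℤ, d < m → coeffZ p m = 0 := by
  refine ⟨fun h m hm => coeffZ_eq_zero_of_degZ_lt (h.trans_lt (WithBot.coe_lt_coe.2 hm)),
    fun h => ?_⟩
  rcases eq_or_ne p 0 with rfl | hp
  · simp [degZ_zero]
  · have hdeg := degZ_of_ne_zero hp
    rw [hdeg, WithBot.coe_le_coe]
    by_contra! hlt
    exact (coeffZ_ne_zero_iff hdeg.le).2 hdeg (h _ hlt)

theorem coeffZ_mul (hp : degZ p ≤ d) (hq : degZ q ≤ e) :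
    coeffZ (p * q) (d + e) = coeffZ p d * coeffZ q e := by
  rcases hp.lt_or_eq with hp_lt | hp_eq
  · rw [coeffZ_eq_zero_of_degZ_lt hp_lt, zero_mul]
    apply coeffZ_eq_zero_of_degZ_lt
    rw [degZ_mul, WithBot.coe_add]
    exact (add_le_add_right hq _).trans_lt (WithBot.add_lt_add_right WithBot.coe_ne_bot hp_lt)
  rcases hq.lt_or_eq with hq_lt | hq_eq
  · rw [coeffZ_eq_zero_of_degZ_lt hq_lt, mul_zero]
    apply coeffZ_eq_zero_of_degZ_lt
    rw [degZ_mul, WithBot.coe_add]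
    exact (add_le_add_left hp _).trans_lt (WithBot.add_lt_add_left WithBot.coe_ne_bot hq_lt)
  rw [coeffZ_eq_leadingCoeff hp_eq, coeffZ_eq_leadingCoeff hq_eq, ← leadingCoeff_mul]
  exact coeffZ_eq_leadingCoeff (by rw [degZ_mul, hp_eq, hq_eq, WithBot.coe_add])

theorem degZ_prod_le {ι : Type*} (S : Finset ι) {f : ι → K[X]} {d : ι → ℤ}
    (h : ∀ i ∈ S, degZ (f i) ≤ d i) : degZ (∏ i ∈ S, f i) ≤ (∑ i ∈ S, d i : ℤ) := by
  rw [degZ_prod, WithBot.coe_sum]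
  exact Finset.sum_le_sum h

theorem coeffZ_prod {ι : Type*} (S : Finset ι) {f : ι → K[X]} {d : ι → ℤ}
    (h : ∀ i ∈ S, degZ (f i) ≤ d i) :
    coeffZ (∏ i ∈ S, f i) (∑ i ∈ S, d i) = ∏ i ∈ S, coeffZ (f i) (d i) := by
  classical
  induction S using Finset.induction_on with
  | empty => simp [coeffZ]
  | insert a S ha ih =>
    rw [Finset.forall_mem_insert] at h
    rw [Finset.prod_insert ha, Finset.sum_insert ha, Finset.prod_insert ha,
      coeffZ_mul h.1 (degZ_prod_le S h.2), ih h.2]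

end Degree

section Determinant

theorem sum_apply_perm_sub {ι A : Type*} [Fintype ι] [AddCommGroup A] (s t : ι → A)
    (σ : Equiv.Perm ι) : ∑ i, (t (σ i) - s i) = ∑ i, t i - ∑ i, s i := by
  rw [Finset.sum_sub_distrib, Equiv.sum_comp σ t]

variable {K : Type*} [Field K] {ι : Type*} [Fintype ι] [DecidableEq ι]
  {M : Matrix ι ι K[X]} {s t : ι → ℤ}

theorem coeffZ_det_apply (M : Matrix ι ι K[X]) (d : ℤ) :
    coeffZ M.det d = ∑ σ : Equiv.Perm ι, Equiv.Perm.sign σ • coeffZ (∏ i, M (σ i) i) d := by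
  simp only [det_apply, coeffZ_sum, coeffZ_smul]

theorem degZ_det_le (h : ∀ i j, degZ (M i j) ≤ (t i - s j : ℤ)) :
    degZ M.det ≤ (∑ i, t i - ∑ i, s i : ℤ) := by
  refine degZ_le_iff_coeffZ_zero.2 fun m hm => ?_
  rw [coeffZ_det_apply]
  refine Finset.sum_eq_zero fun σ _ => ?_
  rw [← sum_apply_perm_sub s t σ] at hm
  rw [degZ_le_iff_coeffZ_zero.1 (degZ_prod_le _ fun i _ => h (σ i) i) m hm, smul_zero]

theorem coeffZ_det (h : ∀ i j, degZ (M i j) ≤ (t i - s j : ℤ)) :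
    coeffZ M.det (∑ i, t i - ∑ i, s i) = (of fun i j => coeffZ (M i j) (t i - s j)).det := by
  rw [coeffZ_det_apply, det_apply]
  refine Finset.sum_congr rfl fun σ _ => ?_
  rw [← sum_apply_perm_sub s t σ, coeffZ_prod _ fun i _ => h (σ i) i]
  rfl

end Determinant

section LeadingMatrix

variable {K : Type*} [Field K] {ι ν : Type*} [Fintype ν] {s : ν → ℤ} {P : Matrix ι ν K[X]}
  {t : ℤ} {i : ι}

theorem degZ_add_le_rdeg (s : ν → ℤ) (P : Matrix ι ν K[X]) (i : ι) (j : ν) :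
    degZ (P i j) + (s j : WithBot ℤ) ≤ rdeg s P i :=
  Finset.le_sup (f := fun j => degZ (P i j) + (s j : WithBot ℤ)) (Finset.mem_univ j)

theorem degZ_le_of_rdeg_eq (h : rdeg s P i = t) (j : ν) : degZ (P i j) ≤ (t - s j : ℤ) := by
  rcases eq_or_ne (P i j) 0 with h0 | h0
  · simp [h0, degZ_zero]
  · have hle := degZ_add_le_rdeg s P i j
    rw [h, degZ_of_ne_zero h0, ← WithBot.coe_add, WithBot.coe_le_coe] at hle
    rw [degZ_of_ne_zero h0, WithBot.coe_le_coe]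
    omega

theorem lm_apply_of_rdeg_eq (h : rdeg s P i = t) (j : ν) :
    lm s P i j = coeffZ (P i j) (t - s j) := by
  simp [lm, h]

theorem lm_apply_of_rdeg_eq_bot (h : rdeg s P i = ⊥) (j : ν) : lm s P i j = 0 := by
  simp [lm, h]

theorem lm_apply_ne_zero_iff (s : ν → ℤ) (P : Matrix ι ν K[X]) (i : ι) (j : ν) :
    lm s P i j ≠ 0 ↔ P i j ≠ 0 ∧ degZ (P i j) + (s j : WithBot ℤ) = rdeg s P i := by
  cases h : rdeg s P i with
  | bot =>
    simp [lm_apply_of_rdeg_eq_bot h, degZ_eq_bot_iff]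
  | coe t =>
    rw [lm_apply_of_rdeg_eq h, coeffZ_ne_zero_iff (degZ_le_of_rdeg_eq h j), degZ_eq_sub_iff]

theorem lm_apply_eq_leadingCoeff {j : ν} (h : lm s P i j ≠ 0) :
    lm s P i j = (P i j).leadingCoeff := by
  cases ht : rdeg s P i with
  | bot => exact absurd (lm_apply_of_rdeg_eq_bot ht j) h
  | coe t =>
    rw [lm_apply_of_rdeg_eq ht] at h ⊢
    exact coeffZ_eq_leadingCoeff ((coeffZ_ne_zero_iff (degZ_le_of_rdeg_eq ht j)).1 h)

theorem IsReducedForm.rdeg_ne_bot (h : IsReducedForm s P) (i : ι) : rdeg s P i ≠ ⊥ :=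
  fun hbot => h.ne_zero i (funext (lm_apply_of_rdeg_eq_bot hbot))

end LeadingMatrix

section Reduced

variable {K : Type*} [Field K] {ι : Type*} [Fintype ι] [DecidableEq ι] {s : ι → ℤ}
  {P : Matrix ι ι K[X]}

theorem isReducedForm_iff_det_lm_ne_zero :
    IsReducedForm s P ↔ (lm s P).det ≠ 0 := by
  rw [← isUnit_iff_ne_zero, ← isUnit_iff_isUnit_det]
  exact linearIndependent_rows_iff_isUnit

theorem IsReducedForm.leadingCoeff_det (h : IsReducedForm s P) :
    P.det.leadingCoeff = (lm s P).det := by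
  choose t ht using fun i => WithBot.ne_bot_iff_exists.1 (h.rdeg_ne_bot i)
  have hdeg (i j) : degZ (P i j) ≤ (t i - s j : ℤ) := degZ_le_of_rdeg_eq (ht i).symm j
  have hcoeff : coeffZ P.det (∑ i, t i - ∑ i, s i) = (lm s P).det := by
    rw [coeffZ_det hdeg]
    congr 1
    ext i j
    exact (lm_apply_of_rdeg_eq (ht i).symm j).symm
  have hne : coeffZ P.det (∑ i, t i - ∑ i, s i) ≠ 0 :=
    hcoeff ▸ isReducedForm_iff_det_lm_ne_zero.1 h
  rw [← hcoeff, coeffZ_eq_leadingCoeff ((coeffZ_ne_zero_iff (degZ_det_le hdeg)).1 hne)]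

theorem IsReducedForm.det_ne_zero (h : IsReducedForm s P) : P.det ≠ 0 := by
  rw [← leadingCoeff_ne_zero, h.leadingCoeff_det]
  exact isReducedForm_iff_det_lm_ne_zero.1 h

end Reduced

section WeakPopov

variable {K : Type*} [Field K]

section Rectangular

variable {ι ν : Type*} [Fintype ν] [LinearOrder ν] {s : ν → ℤ} {P : Matrix ι ν K[X]} {i : ι}
  {j : ν}

open Classical in
theorem piv_eq_max_lm_ne_zero (s : ν → ℤ) (P : Matrix ι ν K[X]) (i : ι) :
    piv s (P i) = (Finset.univ.filter fun j => lm s P i j ≠ 0).max := by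
  simp only [lm_apply_ne_zero_iff]
  rfl

theorem lm_apply_ne_zero_of_piv_eq (h : piv s (P i) = j) : lm s P i j ≠ 0 := by
  rw [piv_eq_max_lm_ne_zero] at h
  simpa using Finset.mem_of_max h

theorem lm_apply_eq_zero_of_piv_lt (h : piv s (P i) < j) : lm s P i j = 0 := by
  rw [piv_eq_max_lm_ne_zero] at h
  simpa using Finset.notMem_of_max_lt_coe h

end Rectangular

variable {ι : Type*} [Fintype ι] [LinearOrder ι] {s : ι → ℤ} {P : Matrix ι ι K[X]}

theorem IsWeakPopov.piv_eq (h : IsWeakPopov s P) (i : ι) : piv s (P i) = i := by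
  choose f hf using fun i => WithBot.ne_bot_iff_exists.1 (h.1 i)
  have hmono : StrictMono f := fun a b hab => by
    simpa only [← hf, WithBot.coe_lt_coe] using h.2 hab
  rw [← hf, le_antisymm hmono.apply_le hmono.le_apply]

theorem IsWeakPopov.det_lm (h : IsWeakPopov s P) :
    (lm s P).det = ∏ i, (P i i).leadingCoeff := by
  have htri : (lm s P).IsLowerTriangular := fun i j hij =>
    lm_apply_eq_zero_of_piv_lt (by rw [h.piv_eq]; exact WithBot.coe_lt_coe.2 hij)
  rw [det_of_isLowerTriangular _ htri]
  exact Finset.prod_congr rfl fun i _ =>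
    lm_apply_eq_leadingCoeff (lm_apply_ne_zero_of_piv_eq (h.piv_eq i))

theorem IsWeakPopov.isReducedForm (h : IsWeakPopov s P) : IsReducedForm s P := by
  rw [isReducedForm_iff_det_lm_ne_zero, h.det_lm, Finset.prod_ne_zero_iff]
  intro i _
  have hi := lm_apply_ne_zero_of_piv_eq (h.piv_eq i)
  exact lm_apply_eq_leadingCoeff hi ▸ hi

end WeakPopov

theorem leadingCoeff_det_of_reduced_general {K : Type*} [Field K] {ι : Type*} [Fintype ι]
    [LinearOrder ι] (s : ι → ℤ) (P : Matrix ι ι K[X]) :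
    (IsReducedForm s P → P.det ≠ 0 ∧ P.det.leadingCoeff = (lm s P).det) ∧
      (IsWeakPopov s P → P.det.leadingCoeff = ∏ i, (P i i).leadingCoeff) :=
  ⟨fun h => ⟨h.det_ne_zero, h.leadingCoeff_det⟩,
    fun h => h.isReducedForm.leadingCoeff_det.trans h.det_lm⟩

/-- Lemma 3.1: for a square `s`-reduced matrix `P`,
`det(P) ≠ 0` and its leading coefficient is `det(lm_s(P))`; if moreover `P` is
in `s`-weak Popov form, this leading coefficient is the product of the leading
coefficients of the diagonal entries of `P`. -/
theorem leadingCoeff_det_of_reduced {K : Type*} [Field K] {n : ℕ}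
    (s : Fin n → ℤ) (P : Matrix (Fin n) (Fin n) K[X])
    (hred : IsReducedForm s P) :
    P.det ≠ 0 ∧ P.det.leadingCoeff = (lm s P).det ∧
      (IsWeakPopov s P → P.det.leadingCoeff = ∏ i, (P i i).leadingCoeff) :=
  have ⟨hreduced, hpopov⟩ := leadingCoeff_det_of_reduced_general s P
  ⟨(hreduced hred).1, (hreduced hred).2, hpopov⟩
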